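/- Let c > 1 and let θ be a smooth admissible function with respect to c and α = 1 with Fourier coefficients (c_k)_{k∈ℤ} and c̃ = 2π/log c. Let f ∈ L¹(ℝ) be bounded and differentiable with f′ ∈ L¹(ℝ) and f vanishing at ±∞. Then for every h > 0 and x ∈ ℝ the series ¹ₕΔ_{c,θ} f(x) := ∑_{k∈ℤ} ( ω_{k,1} h^{i k c̃ − 1} ∑_{j=0}^∞ C(1 − i k c̃, j)(−1)^j f(x − jh) + ω_{k,2} f′(x) ) converges absolutely and is real-valued, and for every x ∈ ℝ, lim_{h ↓ 0} ∫_ℝ e^{ixy} (¹ₕΔ_{c,θ} f)(y) dy = ( ∑_{k∈ℤ, k≠0} ω_{k,1} (−ix)^{1 − i k c̃} + ω_{k,2}(−ix) ) f̂(x), where f̂(x) = ∫_ℝ e^{ixy} f(y) dy. -/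

import Mathlib

/-!
Write `s = i k ctil` and `y = k ctil`. Two facts about `Γ` on the imaginary axis carry the proof.

* The identity `Γ(s) C(1 - s, j) (-1)^j = (s - 1) Γ(s + j - 1) / j!` (`Gamma_mul_gbinom`), with the
  geometric mean of `|Γ(n + iy)| ≤ (n - 1)!` and `|y| |Γ(n + iy)| ≤ n!` (`norm_Gamma_sq_le`), bounds
  the coefficient of `f (x - j h)` by a constant times `|c_k| |k|^(1/2) j^(-3/2)`. Since
  `|c_k| ≤ C / k²`, the double series converges absolutely (`summable_weights`).
* The reflection formula gives `|Γ(iy)|² = π / (|y| sinh (π |y|))`, so that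
  `|Γ(iy)| cosh (π y / 2)` stays bounded (`norm_Gamma_mul_cosh_sq_le`). Hence `∑ |ω₂ k|` converges,
  and `|ω₁ k|` compensates a growth of order `exp (π |y| / 2)`.

Reality holds because the terms of index `k` and `-k` are complex conjugates. By Fubini the
transform of the difference operator may be taken termwise. A translate by `j h` contributes
`exp (i x j h)`, and the binomial series, which sums to `(1 - z) ^ (1 - s)` also on the unit circle
(`gbinom_tsum`), turns row `k` into `ω₁ k * w_h ^ (1 - s)` times the transform of `f`, where
`w_h = (1 - exp (i x h)) / h → -i x` as `h ↓ 0`. As `w_h` has nonnegative real part,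
`|w_h ^ (1 - s)| ≤ 2 |w_h| cosh (π y / 2)`, and dominated convergence for series applies with
majorant a multiple of `|ω₂ k|`.
-/


open MeasureTheory Real Filter Set Complex

noncomputable section

def IsAdmissible (c α : ℝ) (θ : ℝ → ℝ) : Prop :=
  (∀ x, 0 < θ x) ∧
  Function.Periodic θ (Real.log (c ^ (1 / α))) ∧
  ∀ y δ : ℝ, 0 ≤ δ → θ (y + δ) ≤ Real.exp (α * δ) * θ y

def IsSmoothAdmissible (c α : ℝ) (θ : ℝ → ℝ) (cfs : ℤ → ℂ) : Prop :=
  IsAdmissible c α θ ∧ Continuous θ ∧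
  (∀ k : ℤ, cfs (-k) = starRingEnd ℂ (cfs k)) ∧
  (∃ C > 0, ∀ k : ℤ, k ≠ 0 → ‖cfs k‖ ≤ C / (k : ℝ) ^ 2) ∧
  Summable (fun k : ℤ => ‖cfs k‖) ∧
  ∀ x : ℝ, HasSum
    (fun k : ℤ => cfs k * Complex.exp (Complex.I * (k : ℂ) * ((2 * Real.pi * α / Real.log c : ℝ) : ℂ) * (x : ℂ)))
    ((θ x : ℂ))

/-- Generalized binomial coefficient `C(z,j) = z(z-1)⋯(z-j+1)/j!`. -/
def gbinom (z : ℂ) (j : ℕ) : ℂ := (∏ i ∈ Finset.range j, (z - (i : ℂ))) / (j.factorial : ℂ)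

/-! ### The binomial series on the closed unit disc -/

lemma gbinom_eq_choose (a : ℂ) (j : ℕ) : gbinom a j = Ring.choose a j := by
  rw [Ring.choose_eq_smul, Polynomial.descPochhammer_smeval_eq_ascPochhammer,
    Polynomial.ascPochhammer_smeval_cast, Polynomial.ascPochhammer_smeval_eq_eval,
    ← descPochhammer_eval_eq_ascPochhammer, gbinom, smul_eq_mul, descPochhammer_eval_eq_prod_range]
  field_simp

lemma gbinom_hasSum_of_lt {a z : ℂ} (hz : ‖z‖ < 1) :
    HasSum (fun j : ℕ => gbinom a j * (-1 : ℂ) ^ j * z ^ j) ((1 - z) ^ a) := by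
  have h := (Complex.one_add_cpow_hasFPowerSeriesOnBall_zero (a := a)).hasSum
    (y := -z) (by simpa [enorm_eq_nnnorm, ← NNReal.coe_lt_one] using hz)
  simp only [binomialSeries_apply, List.ofFn_const, List.prod_replicate, zero_add, smul_eq_mul] at h
  convert! h using 1
  · ext j
    rw [gbinom_eq_choose, neg_pow z, mul_assoc]

/-- Abel's theorem in the easy case of absolutely summable coefficients: the binomial series sums
to `(1 - z) ^ a` on the closed unit disc. -/
lemma gbinom_tsum {a z : ℂ} (hz : ‖z‖ ≤ 1) (ha : 0 < a.re)
    (hs : Summable fun j : ℕ => ‖gbinom a j‖) :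
    ∑' j : ℕ, gbinom a j * (-1 : ℂ) ^ j * z ^ j = (1 - z) ^ a := by
  have h1 : Tendsto (fun r : ℝ => ∑' j : ℕ, gbinom a j * (-1 : ℂ) ^ j * (r * z) ^ j)
      (nhdsWithin 1 (Ico 0 1)) (nhds (∑' j : ℕ, gbinom a j * (-1 : ℂ) ^ j * z ^ j)) := by
    refine tendsto_tsum_of_dominated_convergence hs (fun j => ?_) ?_
    · have : Continuous fun r : ℝ => gbinom a j * (-1 : ℂ) ^ j * ((r : ℂ) * z) ^ j := by fun_prop
      simpa using (this.tendsto 1).mono_left nhdsWithin_le_nhds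
    · filter_upwards [self_mem_nhdsWithin] with r hr j
      have : ‖(r : ℂ) * z‖ ≤ 1 := by
        rw [norm_mul, Complex.norm_real, Real.norm_of_nonneg hr.1]
        exact mul_le_one₀ hr.2.le (norm_nonneg _) hz
      rw [norm_mul, norm_mul, norm_pow, norm_pow, norm_neg, norm_one, one_pow, mul_one]
      exact mul_le_of_le_one_right (norm_nonneg _) (pow_le_one₀ (norm_nonneg _) this)
  have h2 : Tendsto (fun r : ℝ => (1 - (r : ℂ) * z) ^ a)
      (nhdsWithin 1 (Ico 0 1)) (nhds ((1 - z) ^ a)) := by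
    have hre : 0 ≤ (1 - z).re := by
      have := Complex.re_le_norm z
      simp only [sub_re, one_re]; linarith
    have hc : Tendsto (fun r : ℝ => (1 - (r : ℂ) * z)) (nhdsWithin 1 (Ico 0 1)) (nhds (1 - z)) := by
      have : Continuous fun r : ℝ => (1 - (r : ℂ) * z) := by fun_prop
      simpa using (this.tendsto 1).mono_left nhdsWithin_le_nhds
    exact (Complex.continuousAt_cpow_const_of_re_pos (Or.inl hre) ha).tendsto.comp hc
  have : (nhdsWithin (1 : ℝ) (Ico 0 1)).NeBot := by
    rw [← mem_closure_iff_nhdsWithin_neBot, closure_Ico (by norm_num)]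
    simp
  refine tendsto_nhds_unique h1 (h2.congr' ?_)
  filter_upwards [self_mem_nhdsWithin] with r hr
  refine ((gbinom_hasSum_of_lt ?_).tsum_eq).symm
  rw [norm_mul, Complex.norm_real, Real.norm_of_nonneg hr.1]
  exact (mul_le_of_le_one_right hr.1 hz).trans_lt hr.2

/-! ### The Gamma function near the imaginary axis -/

lemma norm_Gamma_le_Gamma_re {s : ℂ} (hs : 0 < s.re) : ‖Complex.Gamma s‖ ≤ Real.Gamma s.re := by
  rw [Complex.Gamma_eq_integral hs, Real.Gamma_eq_integral hs, Complex.GammaIntegral]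
  refine (norm_integral_le_integral_norm _).trans_eq ?_
  refine setIntegral_congr_fun measurableSet_Ioi fun x hx => ?_
  simp only [norm_mul, Complex.norm_real, norm_cpow_eq_rpow_re_of_pos hx, sub_re, one_re,
    Real.norm_of_nonneg (Real.exp_pos _).le]

lemma norm_Gamma_I_add_le {y : ℝ} (n : ℕ) :
    ‖Complex.Gamma (I * y + (n + 1 : ℕ))‖ ≤ (n.factorial : ℝ) := by
  have := norm_Gamma_le_Gamma_re (s := I * y + (n + 1 : ℕ)) (by simp; positivity)
  simpa [Real.Gamma_nat_eq_factorial] using this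

lemma I_mul_add_ne_zero {y : ℝ} (hy : y ≠ 0) (n : ℕ) : I * (y : ℂ) + n ≠ 0 := by
  intro h
  have := congrArg Complex.im h
  simp at this
  exact hy this

lemma norm_Gamma_I_add_mul_le {y : ℝ} (hy : y ≠ 0) (n : ℕ) :
    ‖Complex.Gamma (I * y + n)‖ * |y| ≤ (n.factorial : ℝ) := by
  have h := norm_Gamma_I_add_le (y := y) n
  rw [Nat.cast_succ, ← add_assoc, Complex.Gamma_add_one _ (I_mul_add_ne_zero hy n), norm_mul] at h
  have h2 : |y| ≤ ‖I * (y : ℂ) + n‖ := by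
    have := Complex.abs_im_le_norm (I * (y : ℂ) + n)
    simpa using this
  calc _ ≤ ‖Complex.Gamma (I * y + n)‖ * ‖I * (y : ℂ) + n‖ := by gcongr
    _ ≤ _ := by rw [mul_comm]; exact h

/-- Geometric mean of the bounds `|Γ(n + iy)| ≤ (n - 1)!` and `|y| |Γ(n + iy)| ≤ n!`: it gains
half a power in both `n` and `y`, which is what makes the double series over `(k, j)` summable. -/
lemma norm_Gamma_sq_le {y d : ℝ} (hd : 0 < d) (hy : d ≤ |y|) (n : ℕ) :
    ‖Complex.Gamma (I * y + n)‖ ^ 2 * |y| * (n + 1) ≤ (2 + 1 / d) * (n.factorial : ℝ) ^ 2 := by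
  have hy0 : y ≠ 0 := by
    rintro rfl
    simp at hy; linarith
  have h := norm_Gamma_I_add_mul_le hy0 n
  rcases n with _ | m
  · simp only [Nat.factorial_zero, Nat.cast_one, Nat.cast_zero, zero_add, mul_one, one_pow] at h ⊢
    have : ‖Complex.Gamma (I * y + 0)‖ ≤ 1 / d := by
      rw [le_div_iff₀ hd]
      exact (mul_le_mul_of_nonneg_left hy (norm_nonneg _)).trans h
    nlinarith [norm_nonneg (Complex.Gamma (I * y + 0))]
  · have h' := norm_Gamma_I_add_le (y := y) m
    have hf : ((m + 1).factorial : ℝ) = (m + 1) * m.factorial := by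
      rw [Nat.factorial_succ]; push_cast; ring
    set G := ‖Complex.Gamma (I * y + (m + 1 : ℕ))‖
    have hG : 0 ≤ G := norm_nonneg _
    have hm : (0 : ℝ) < m.factorial := by positivity
    have hm0 : (0 : ℝ) ≤ m := by positivity
    calc G ^ 2 * |y| * ((m + 1 : ℕ) + 1) = (G * |y|) * G * (m + 2) := by push_cast; ring
      _ ≤ (m + 1).factorial * m.factorial * (m + 2) := by gcongr
      _ ≤ 2 * ((m + 1).factorial : ℝ) ^ 2 := by
        rw [hf]
        have : 0 ≤ (m.factorial : ℝ) ^ 2 * (m + 1) * m := by positivity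
        nlinarith
      _ ≤ _ := by
        have : 0 ≤ 1 / d := by positivity
        gcongr; linarith

/-- The reflection formula on the imaginary axis. -/
lemma norm_Gamma_I_sq {y : ℝ} (hy : y ≠ 0) :
    ‖Complex.Gamma (I * y)‖ ^ 2 * (|y| * Real.sinh (π * |y|)) = π := by
  have h1 := Complex.Gamma_mul_Gamma_one_sub (I * y)
  have h2 : (1 : ℂ) - I * y = -(I * y) + 1 := by ring
  have hI : -(I * (y : ℂ)) ≠ 0 := by
    have := I_mul_add_ne_zero hy 0
    simpa using this
  have h3 : -(I * (y : ℂ)) = starRingEnd ℂ (I * y) := by simp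
  rw [h2, Complex.Gamma_add_one _ hI] at h1
  have h4 : Complex.Gamma (-(I * (y : ℂ))) = starRingEnd ℂ (Complex.Gamma (I * y)) := by
    rw [h3, Complex.Gamma_conj]
  have h5 : Complex.sin (π * (I * y)) = Real.sinh (π * y) * I := by
    rw [show (π : ℂ) * (I * y) = (π * y : ℝ) * I by push_cast; ring, Complex.sin_mul_I,
      Complex.ofReal_sinh]
  have hs : Real.sinh (π * y) ≠ 0 := by
    rw [Ne, Real.sinh_eq_zero]; positivity
  rw [h4, h5] at h1
  have h6 := congrArg norm h1
  simp only [norm_mul, norm_neg, norm_div, Complex.norm_I, Complex.norm_real, RCLike.norm_conj,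
    Real.norm_eq_abs, one_mul, mul_one, abs_of_pos Real.pi_pos] at h6
  have h7 : |Real.sinh (π * y)| = Real.sinh (π * |y|) := by
    rw [Real.abs_sinh, abs_mul, abs_of_pos Real.pi_pos]
  rw [h7] at h6
  have : Real.sinh (π * |y|) ≠ 0 := by rw [← h7]; exact abs_ne_zero.mpr hs
  rw [eq_div_iff this] at h6
  linarith

/-- The growth of the cosine exactly balances the decay of `Γ` on the imaginary axis. -/
lemma norm_Gamma_mul_cosh_sq_le {y d : ℝ} (hd : 0 < d) (hy : d ≤ |y|) :
    (‖Complex.Gamma (I * y)‖ * Real.cosh (π * y / 2)) ^ 2 ≤ π / (2 * d) * (1 + 2 / (π * d)) := by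
  have hy0 : y ≠ 0 := by
    rintro rfl
    simp at hy; linarith
  have hyp : 0 < |y| := hd.trans_le hy
  set u := π * |y| / 2 with hu
  have hup : 0 < u := by positivity
  have hcosh : Real.cosh (π * y / 2) = Real.cosh u := by
    rw [← Real.cosh_abs, abs_div, abs_mul, abs_of_pos Real.pi_pos, abs_two]
  have hG := norm_Gamma_I_sq hy0
  rw [show π * |y| = 2 * u by rw [hu]; ring, Real.sinh_two_mul] at hG
  have hsinh : u ≤ Real.sinh u := Real.self_le_sinh_iff.mpr hup.le
  have hc : Real.cosh u ≤ (1 + 1 / u) * Real.sinh u := by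
    have h1 : Real.cosh u = Real.sinh u + Real.exp (-u) := by
      rw [Real.cosh_eq, Real.sinh_eq]; ring
    have h2 : Real.exp (-u) ≤ 1 := Real.exp_le_one_iff.mpr (by linarith)
    have h3 : 1 ≤ 1 / u * Real.sinh u := by
      rw [one_div, inv_mul_eq_div, le_div_iff₀ hup]; linarith
    rw [h1, add_mul, one_mul]; linarith
  have hsp : 0 < Real.sinh u := hup.trans_le hsinh
  have hcp := Real.cosh_pos u
  rw [hcosh, mul_pow]
  set G := ‖Complex.Gamma (I * y)‖
  have hu1 : 1 / u ≤ 2 / (π * d) := by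
    rw [hu, one_div_div]
    gcongr
  have e1 : G ^ 2 * Real.cosh u ^ 2 = π / (2 * |y|) * (Real.cosh u / Real.sinh u) := by
    field_simp
    linear_combination hG
  rw [e1]
  have e2 : Real.cosh u / Real.sinh u ≤ 1 + 2 / (π * d) := by
    rw [div_le_iff₀ hsp]
    exact hc.trans (by gcongr)
  gcongr

/-- The factor `Γ(s)` in the weight turns the binomial coefficient into a Gamma value:
`Γ(s) C(1 - s, j) (-1) ^ j = (s - 1) Γ(s + j - 1) / j!` for `j = n + 1`. -/
lemma Gamma_mul_gbinom {s : ℂ} (hs : ∀ n : ℕ, s + n ≠ 0) (n : ℕ) :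
    Complex.Gamma s * (gbinom (1 - s) (n + 1) * (-1) ^ (n + 1)) =
      (s - 1) * Complex.Gamma (s + n) / ((n + 1).factorial : ℂ) := by
  induction n with
  | zero => simp [gbinom]; ring
  | succ n ih =>
    have h1 : gbinom (1 - s) (n + 1 + 1) =
        gbinom (1 - s) (n + 1) * ((1 - s) - (n + 1 : ℕ)) / (n + 1 + 1 : ℕ) := by
      have : ((n + 1 + 1 : ℕ) : ℂ) ≠ 0 := by exact_mod_cast Nat.succ_ne_zero (n + 1)
      have : ((n + 1).factorial : ℂ) ≠ 0 := by exact_mod_cast Nat.factorial_ne_zero (n + 1)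
      rw [gbinom, gbinom, Finset.prod_range_succ, Nat.factorial_succ (n + 1)]
      rw [Nat.cast_mul]
      field_simp
    have h2 : Complex.Gamma (s + (n + 1 : ℕ)) = (s + n) * Complex.Gamma (s + n) := by
      rw [Nat.cast_succ, ← add_assoc, Complex.Gamma_add_one _ (hs n)]
    rw [h1, h2, Nat.factorial_succ (n + 1), Nat.cast_mul]
    have h3 : Complex.Gamma s * (gbinom (1 - s) (n + 1) * ((1 - s) - (n + 1 : ℕ)) / (n + 1 + 1 : ℕ) *
        (-1) ^ (n + 1 + 1)) = Complex.Gamma s * (gbinom (1 - s) (n + 1) * (-1) ^ (n + 1)) *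
          ((s + n) / (n + 1 + 1 : ℕ)) := by
      push_cast; ring
    rw [h3, ih]
    have : ((n + 1 + 1 : ℕ) : ℂ) ≠ 0 := by exact_mod_cast Nat.succ_ne_zero (n + 1)
    have : ((n + 1).factorial : ℂ) ≠ 0 := by exact_mod_cast Nat.factorial_ne_zero (n + 1)
    field_simp

/-! ### Summability of the weights -/

lemma abs_int_mul_ge {d : ℝ} (hd : 0 < d) {k : ℤ} (hk : k ≠ 0) : d ≤ |(k : ℝ) * d| := by
  have : (1 : ℝ) ≤ |(k : ℝ)| := by exact_mod_cast Int.one_le_abs hk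
  rw [abs_mul, abs_of_pos hd]
  nlinarith

/-- The binomial coefficients, weighted with the Gamma factor, decay like `(n + 1) ^ (-3/2)` and grow
only like `√|y|`. -/
lemma norm_Gamma_mul_gbinom_succ_le {y d : ℝ} (hd : 0 < d) (hy : d ≤ |y|) (n : ℕ) :
    ‖Complex.Gamma (I * y)‖ * ‖gbinom (1 - I * y) (n + 1)‖ ≤
      (1 + |y|) * √(2 + 1 / d) / √|y| * (1 / ((n + 1 : ℕ) * √(n + 1 : ℕ))) := by
  have hy0 : y ≠ 0 := by
    rintro rfl
    simp at hy; linarith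
  have hyp : 0 < |y| := hd.trans_le hy
  have h := congrArg norm (Gamma_mul_gbinom (fun n => I_mul_add_ne_zero hy0 n) n)
  simp only [norm_mul, norm_div, norm_pow, norm_neg, norm_one, one_pow, mul_one,
    Complex.norm_natCast] at h
  rw [h]
  have h1 : ‖I * (y : ℂ) - 1‖ ≤ 1 + |y| := by
    refine (norm_sub_le _ _).trans ?_
    simp [add_comm]
  have h2 : ‖Complex.Gamma (I * y + n)‖ ≤
      √(2 + 1 / d) * n.factorial / (√|y| * √(n + 1 : ℕ)) := by
    rw [le_div_iff₀ (by positivity)]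
    refine le_of_sq_le_sq ?_ (by positivity)
    have := norm_Gamma_sq_le hd hy n
    rw [mul_pow, mul_pow, mul_pow, Real.sq_sqrt hyp.le, Real.sq_sqrt (by positivity),
      Real.sq_sqrt (by positivity)]
    push_cast
    linarith
  rw [Nat.factorial_succ, Nat.cast_mul]
  calc _ ≤ (1 + |y|) * (√(2 + 1 / d) * n.factorial / (√|y| * √(n + 1 : ℕ))) /
        ((n + 1 : ℕ) * (n.factorial : ℝ)) := by gcongr
    _ = _ := by
      have : (n.factorial : ℝ) ≠ 0 := by positivity
      field_simp

lemma summable_sqrt_div_sq : Summable fun k : ℤ => √|(k : ℝ)| / (k : ℝ) ^ 2 := by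
  refine (Real.summable_abs_int_rpow (b := 3 / 2) (by norm_num)).congr fun k => ?_
  rcases eq_or_ne k 0 with rfl | hk
  · simp
  · have : 0 < |(k : ℝ)| := by positivity
    rw [← sq_abs, Real.sqrt_eq_rpow, ← Real.rpow_natCast, ← Real.rpow_sub this]
    norm_num

lemma summable_one_div_mul_sqrt : Summable fun j : ℕ => 1 / ((j : ℝ) * √j) := by
  refine (Real.summable_one_div_nat_rpow (p := 3 / 2)).mpr (by norm_num) |>.congr fun j => ?_
  rcases eq_or_ne j 0 with rfl | hj
  · simp
  · have : 0 < (j : ℝ) := by positivity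
    rw [Real.sqrt_eq_rpow]
    nth_rewrite 2 [← Real.rpow_one (j : ℝ)]
    rw [← Real.rpow_add this]
    norm_num

/-- Absolute summability of the double series: the weight of index `(k, j)` is at most a constant
times `|k| ^ (-3/2) * j ^ (-3/2)` (for `j ≠ 0`). -/
lemma summable_weights {d : ℝ} (hd : 0 < d) {a w : ℤ → ℂ} {C : ℝ}
    (ha : ∀ k : ℤ, k ≠ 0 → ‖a k‖ ≤ C / (k : ℝ) ^ 2)
    (hw0 : w 0 = 0)
    (hw : ∀ k : ℤ, k ≠ 0 → ‖w k‖ = ‖a k‖ * ‖Complex.Gamma (I * ((k * d : ℝ) : ℂ))‖) :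
    Summable fun p : ℤ × ℕ => ‖w p.1‖ * ‖gbinom (1 - I * ((p.1 * d : ℝ) : ℂ)) p.2‖ := by
  set B : ℕ → ℝ := fun j => if j = 0 then 1 else 1 / ((j : ℝ) * √j) with hB
  set D : ℝ := 1 / d + (1 + d) * √(2 + 1 / d) / √d with hD
  have hB0 : ∀ j, 0 ≤ B j := fun j => by
    simp only [hB]; split_ifs <;> positivity
  have hBs : Summable B := by
    rw [← summable_nat_add_iff 1]
    simpa [hB] using (summable_nat_add_iff 1).mpr summable_one_div_mul_sqrt
  have hC : 0 ≤ C := by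
    have := (norm_nonneg _).trans (ha 1 one_ne_zero)
    simpa using this
  have hA := summable_sqrt_div_sq.mul_left (C * D)
  refine Summable.of_nonneg_of_le (fun p => by positivity) ?_
    (hA.mul_of_nonneg hBs (fun k => by positivity) hB0)
  rintro ⟨k, j⟩
  dsimp only
  rcases eq_or_ne k 0 with rfl | hk
  · simp [hw0]
  rw [hw k hk]
  have hy := abs_int_mul_ge hd hk
  have hk1 : (1 : ℝ) ≤ |(k : ℝ)| := by exact_mod_cast Int.one_le_abs hk
  have hky : |(k : ℝ) * d| = |(k : ℝ)| * d := by rw [abs_mul, abs_of_pos hd]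
  have hq : (1 : ℝ) ≤ √|(k : ℝ)| := Real.one_le_sqrt.mpr hk1
  have hk2 : 0 < (k : ℝ) ^ 2 := by positivity
  suffices h : ‖Complex.Gamma (I * ((k * d : ℝ) : ℂ))‖ *
      ‖gbinom (1 - I * ((k * d : ℝ) : ℂ)) j‖ ≤ D * √|(k : ℝ)| * B j by
    calc _ = ‖a k‖ * (‖Complex.Gamma (I * ((k * d : ℝ) : ℂ))‖ *
          ‖gbinom (1 - I * ((k * d : ℝ) : ℂ)) j‖) := by ring
      _ ≤ C / (k : ℝ) ^ 2 * (D * √|(k : ℝ)| * B j) := by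
        gcongr
        exact ha k hk
      _ = _ := by ring
  rcases j with _ | n
  · have hy0 : (k : ℝ) * d ≠ 0 := by positivity
    have h := norm_Gamma_I_add_mul_le hy0 0
    simp only [Nat.factorial_zero, Nat.cast_one, Nat.cast_zero, add_zero] at h
    have h1 : ‖Complex.Gamma (I * ((k * d : ℝ) : ℂ))‖ ≤ 1 / d := by
      rw [le_div_iff₀ hd]
      exact (mul_le_mul_of_nonneg_left hy (norm_nonneg _)).trans h
    have h2 : 1 / d ≤ D := by
      rw [hD]; exact le_add_of_nonneg_right (by positivity)
    simp only [gbinom, hB, Finset.range_zero, Finset.prod_empty, Nat.factorial_zero, Nat.cast_one,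
      div_one, norm_one, mul_one, if_true]
    exact h1.trans (h2.trans (le_mul_of_one_le_right (by positivity) hq))
  · refine (norm_Gamma_mul_gbinom_succ_le hd hy n).trans ?_
    have hBn : B (n + 1) = 1 / ((n + 1 : ℕ) * √(n + 1 : ℕ)) := by simp [hB]
    rw [hBn]
    gcongr
    rw [hky, Real.sqrt_mul (abs_nonneg _), div_le_iff₀ (by positivity)]
    have e : D * √|(k : ℝ)| * (√|(k : ℝ)| * √d) = D * √d * |(k : ℝ)| := by
      rw [show D * √|(k : ℝ)| * (√|(k : ℝ)| * √d) = D * √d * (√|(k : ℝ)| * √|(k : ℝ)|) by ring,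
        Real.mul_self_sqrt (abs_nonneg _)]
    have e2 : (1 + d) * √(2 + 1 / d) ≤ D * √d := by
      have hsd : √d ≠ 0 := (Real.sqrt_pos.mpr hd).ne'
      rw [hD, add_mul (1 / d), div_mul_cancel₀ ((1 + d) * √(2 + 1 / d)) hsd]
      exact le_add_of_nonneg_left (by positivity)
    rw [e]
    calc (1 + |(k : ℝ)| * d) * √(2 + 1 / d) ≤ (|(k : ℝ)| + |(k : ℝ)| * d) * √(2 + 1 / d) := by
          gcongr
      _ = (1 + d) * √(2 + 1 / d) * |(k : ℝ)| := by ring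
      _ ≤ _ := by gcongr

lemma norm_cos_pi_div_two_mul_I (y : ℝ) :
    ‖Complex.cos ((π : ℂ) / 2 * (I * (y : ℂ)))‖ = Real.cosh (π * y / 2) := by
  rw [show (π : ℂ) / 2 * (I * (y : ℂ)) = ((π * y / 2 : ℝ) : ℂ) * I by push_cast; ring,
    Complex.cos_mul_I, ← Complex.ofReal_cosh, Complex.norm_real,
    Real.norm_of_nonneg (Real.cosh_pos _).le]

lemma exists_norm_Gamma_mul_cos_le {d : ℝ} (hd : 0 < d) :
    ∃ K : ℝ, ∀ y : ℝ, d ≤ |y| →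
      ‖Complex.Gamma (I * y)‖ * ‖Complex.cos ((π : ℂ) / 2 * (I * (y : ℂ)))‖ ≤ K := by
  refine ⟨√(π / (2 * d) * (1 + 2 / (π * d))), fun y hy => ?_⟩
  rw [norm_cos_pi_div_two_mul_I]
  exact Real.le_sqrt_of_sq_le (norm_Gamma_mul_cosh_sq_le hd hy)

/-! ### Fourier transforms of translates and derivatives -/

lemma norm_exp_I_mul_mul (x y : ℝ) : ‖Complex.exp (I * (x : ℂ) * (y : ℂ))‖ = 1 := by
  rw [show I * (x : ℂ) * (y : ℂ) = ((x * y : ℝ) : ℂ) * I by push_cast; ring]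
  exact Complex.norm_exp_ofReal_mul_I _

lemma integrable_exp_mul {g : ℝ → ℝ} (hg : Integrable g) (x : ℝ) :
    Integrable fun y : ℝ => Complex.exp (I * (x : ℂ) * (y : ℂ)) * ((g y : ℝ) : ℂ) := by
  refine hg.ofReal.bdd_mul (c := 1) ?_ ?_
  · exact (Continuous.aestronglyMeasurable (by fun_prop))
  · exact Eventually.of_forall fun y => (norm_exp_I_mul_mul x y).le

lemma integral_exp_mul_translate (g : ℝ → ℝ) (x t : ℝ) :
    ∫ y : ℝ, Complex.exp (I * (x : ℂ) * (y : ℂ)) * ((g (y - t) : ℝ) : ℂ) =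
      Complex.exp (I * (x : ℂ) * (t : ℂ)) *
        ∫ y : ℝ, Complex.exp (I * (x : ℂ) * (y : ℂ)) * ((g y : ℝ) : ℂ) := by
  rw [← integral_const_mul, ← integral_sub_right_eq_self (fun y : ℝ =>
    Complex.exp (I * (x : ℂ) * (t : ℂ)) *
      (Complex.exp (I * (x : ℂ) * (y : ℂ)) * ((g y : ℝ) : ℂ))) t]
  congr 1
  ext y
  rw [← mul_assoc, ← Complex.exp_add]
  congr 2
  push_cast
  ring

lemma integral_exp_mul_deriv {f f' : ℝ → ℝ} (hder : ∀ x, HasDerivAt f (f' x) x)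
    (hfi : Integrable f) (hf'i : Integrable f') (x : ℝ) :
    ∫ y : ℝ, Complex.exp (I * (x : ℂ) * (y : ℂ)) * ((f' y : ℝ) : ℂ) =
      -I * (x : ℂ) * ∫ y : ℝ, Complex.exp (I * (x : ℂ) * (y : ℂ)) * ((f y : ℝ) : ℂ) := by
  have hu : ∀ y : ℝ, HasDerivAt (fun y : ℝ => Complex.exp (I * (x : ℂ) * (y : ℂ)))
      (Complex.exp (I * (x : ℂ) * (y : ℂ)) * (I * x)) y := fun y => by
    have := ((Complex.ofRealCLM.hasDerivAt (x := y)).const_mul (I * (x : ℂ))).cexp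
    simpa using this
  have hv : ∀ y : ℝ, HasDerivAt (fun y : ℝ => ((f y : ℝ) : ℂ)) ((f' y : ℝ) : ℂ) y :=
    fun y => (hder y).ofReal_comp
  have hi := integrable_exp_mul hfi x
  have := integral_mul_deriv_eq_deriv_mul_of_integrable (fun y _ => hu y) (fun y _ => hv y)
    (integrable_exp_mul hf'i x) ((hi.const_mul (I * (x : ℂ))).congr
      (Eventually.of_forall fun y => by simp only [Pi.mul_apply]; ring)) hi
  rw [this, ← integral_const_mul, ← integral_neg]
  congr 1
  ext y
  ring

/-! ### Complex powers of difference quotients -/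

lemma cpow_mul_cpow_eq {h : ℝ} (hh : 0 < h) (u : ℂ) {a : ℂ} (ha : a ≠ 0) :
    (h : ℂ) ^ (-a) * u ^ a = (u / h) ^ a := by
  rcases eq_or_ne u 0 with rfl | hu
  · simp [Complex.zero_cpow ha]
  have hh' : (h : ℂ) ≠ 0 := by exact_mod_cast hh.ne'
  have h1 : u / h = ((h⁻¹ : ℝ) : ℂ) * u := by push_cast; field_simp
  rw [h1, Complex.cpow_def_of_ne_zero hh', Complex.cpow_def_of_ne_zero hu,
    Complex.cpow_def_of_ne_zero (h1 ▸ div_ne_zero hu hh'), ← Complex.exp_add,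
    Complex.log_ofReal_mul (inv_pos.mpr hh) hu, Real.log_inv, Complex.ofReal_neg,
    Complex.ofReal_log hh.le]
  congr 1
  ring

/-- On the closed right half-plane the argument is at most `π / 2`, so a power with exponent
`1 - iy` costs at most a factor `exp (π |y| / 2) ≤ 2 cosh (π y / 2)`. -/
lemma norm_cpow_one_sub_le {u : ℂ} (hu : 0 ≤ u.re) (y : ℝ) :
    ‖u ^ (1 - I * (y : ℂ))‖ ≤ ‖u‖ * (2 * Real.cosh (π * y / 2)) := by
  rcases eq_or_ne u 0 with rfl | hu0
  · rw [Complex.zero_cpow]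
    · simp
    · intro h
      have := congrArg Complex.re h
      simp at this
  rw [Complex.norm_cpow_of_ne_zero hu0]
  have h1 : (1 - I * (y : ℂ)).re = 1 := by simp
  have h2 : (1 - I * (y : ℂ)).im = -y := by simp
  rw [h1, h2, Real.rpow_one, div_eq_mul_inv, ← Real.exp_neg]
  gcongr
  have h3 := Complex.abs_arg_le_pi_div_two_iff.mpr hu
  have h4 : -(arg u * -y) ≤ π * |y| / 2 := by
    calc -(arg u * -y) = arg u * y := by ring
      _ ≤ |arg u| * |y| := by rw [← abs_mul]; exact le_abs_self _
      _ ≤ π / 2 * |y| := by gcongr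
      _ = _ := by ring
  have h5 : Real.cosh (π * y / 2) = Real.cosh (π * |y| / 2) := by
    rw [← Real.cosh_abs, abs_div, abs_mul, abs_of_pos Real.pi_pos, abs_two]
  rw [h5, Real.cosh_eq]
  have := Real.exp_pos (-(π * |y| / 2))
  have := Real.exp_le_exp.mpr h4
  linarith

lemma tendsto_diffQuot (x : ℝ) :
    Tendsto (fun h : ℝ => (1 - Complex.exp (I * (x : ℂ) * (h : ℂ))) / (h : ℂ))
      (nhdsWithin 0 (Set.Ioi 0)) (nhds (-I * (x : ℂ))) := by
  have hd : HasDerivAt (fun h : ℝ => 1 - Complex.exp (I * (x : ℂ) * (h : ℂ))) (-I * (x : ℂ)) 0 := by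
    have := (((Complex.ofRealCLM.hasDerivAt (x := (0 : ℝ))).const_mul (I * (x : ℂ))).cexp).const_sub 1
    simpa using this
  refine hd.tendsto_slope_zero_right.congr fun h => ?_
  simp [div_eq_inv_mul]

lemma diffQuot_re_nonneg (x : ℝ) {h : ℝ} (hh : 0 < h) :
    0 ≤ ((1 - Complex.exp (I * (x : ℂ) * (h : ℂ))) / (h : ℂ)).re := by
  rw [Complex.div_ofReal_re]
  refine div_nonneg ?_ hh.le
  have := Complex.re_le_norm (Complex.exp (I * (x : ℂ) * (h : ℂ)))
  rw [norm_exp_I_mul_mul] at this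
  simp only [sub_re, one_re]; linarith

lemma tendsto_diffQuot_cpow (x : ℝ) {a : ℂ} (ha : 0 < a.re) :
    Tendsto (fun h : ℝ => ((1 - Complex.exp (I * (x : ℂ) * (h : ℂ))) / (h : ℂ)) ^ a)
      (nhdsWithin 0 (Set.Ioi 0)) (nhds ((-I * (x : ℂ)) ^ a)) :=
  (Complex.continuousAt_cpow_const_of_re_pos (Or.inl (by simp)) ha).tendsto.comp
    (tendsto_diffQuot x)

lemma gbinom_conj (z : ℂ) (j : ℕ) :
    starRingEnd ℂ (gbinom z j) = gbinom (starRingEnd ℂ z) j := by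
  simp [gbinom, map_prod]

lemma integrable_tsum_of_summable_integral_norm {ι : Type*} [Countable ι] {G : ι → ℝ → ℂ}
    (hm : AEStronglyMeasurable (fun y => ∑' p, G p y)) (hGi : ∀ p, Integrable (G p))
    (hGn : Summable fun p => ∫ y, ‖G p y‖) : Integrable fun y => ∑' p, G p y := by
  refine ⟨hm, ?_⟩
  calc ∫⁻ y, ‖∑' p, G p y‖ₑ ≤ ∫⁻ y, ∑' p, ‖G p y‖ₑ :=
        lintegral_mono fun y => enorm_tsum_le_tsum_enorm
    _ = ∑' p, ENNReal.ofReal (∫ y, ‖G p y‖) := by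
      rw [lintegral_tsum fun p => (hGi p).1.enorm]
      simp only [ofReal_integral_norm_eq_lintegral_enorm (hGi _)]
    _ < ⊤ := hGn.tsum_ofReal_lt_top

/-! ### The limit theorem -/

theorem stmt15 (c : ℝ) (hc : 1 < c)
    (θ : ℝ → ℝ) (cfs : ℤ → ℂ) (hθ : IsSmoothAdmissible c 1 θ cfs)
    (ctil : ℝ) (hctil : ctil = 2 * Real.pi / Real.log c)
    (ω₁ ω₂ : ℤ → ℂ)
    (hω₁ : ∀ k : ℤ, ω₁ k =
      if k = 0 then 0 else -(cfs k * Complex.Gamma (Complex.I * (k : ℂ) * (ctil : ℂ))))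
    (hω₂ : ∀ k : ℤ, ω₂ k = if k = 0 then 0 else
      cfs k * Complex.Gamma (Complex.I * (k : ℂ) * (ctil : ℂ)) *
        Complex.cos ((Real.pi : ℂ) / 2 * (Complex.I * (k : ℂ) * (ctil : ℂ))))
    (f f' : ℝ → ℝ) (hder : ∀ x, HasDerivAt f (f' x) x)
    (hfb : ∃ M : ℝ, ∀ y, |f y| ≤ M) (hfi : Integrable f)
    (hf'i : Integrable f') (hf0 : Tendsto f (cocompact ℝ) (nhds 0))
    (Δ₁ : ℝ → ℝ → ℂ)
    (hΔ₁ : ∀ h > (0 : ℝ), ∀ x : ℝ, Δ₁ h x =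
      ∑' k : ℤ, (ω₁ k * ((h : ℂ)) ^ (Complex.I * (k : ℂ) * (ctil : ℂ) - 1) *
        (∑' j : ℕ, gbinom ((1 : ℂ) - Complex.I * (k : ℂ) * (ctil : ℂ)) j * (-1 : ℂ) ^ j *
          ((f (x - j * h) : ℝ) : ℂ)) + ω₂ k * ((f' x : ℝ) : ℂ))) :
    (∀ h > (0 : ℝ), ∀ x : ℝ,
      Summable (fun p : ℤ × ℕ =>
        ‖ω₁ p.1 * ((h : ℂ)) ^ (Complex.I * (p.1 : ℂ) * (ctil : ℂ) - 1) *
          (gbinom ((1 : ℂ) - Complex.I * (p.1 : ℂ) * (ctil : ℂ)) p.2 * (-1 : ℂ) ^ p.2 *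
            ((f (x - p.2 * h) : ℝ) : ℂ))‖) ∧
      Summable (fun k : ℤ => ‖ω₂ k * ((f' x : ℝ) : ℂ)‖) ∧
      (Δ₁ h x).im = 0) ∧
    (∀ x : ℝ,
      Tendsto (fun h : ℝ => ∫ y : ℝ, Complex.exp (Complex.I * (x : ℂ) * (y : ℂ)) * Δ₁ h y)
        (nhdsWithin 0 (Set.Ioi 0))
        (nhds ((∑' k : {k : ℤ // k ≠ 0},
            (ω₁ k * (-Complex.I * (x : ℂ)) ^ ((1 : ℂ) - Complex.I * ((k : ℤ) : ℂ) * (ctil : ℂ))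
              + ω₂ k * (-Complex.I * (x : ℂ)))) *
          ∫ y : ℝ, Complex.exp (Complex.I * (x : ℂ) * (y : ℂ)) * ((f y : ℝ) : ℂ)))) := by
  have hct : 0 < ctil := by
    rw [hctil]
    have := Real.log_pos hc
    positivity
  obtain ⟨-, -, hconj, ⟨C, hC0, hC⟩, hcs, -⟩ := hθ
  have hs : ∀ k : ℤ, I * (k : ℂ) * (ctil : ℂ) = I * ((k * ctil : ℝ) : ℂ) := fun k => by
    push_cast; ring
  simp only [hs] at hω₁ hω₂ hΔ₁ ⊢
  have hω₁0 : ω₁ 0 = 0 := by simp [hω₁]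
  have hω₂0 : ω₂ 0 = 0 := by simp [hω₂]
  have hω₁n : ∀ k : ℤ, k ≠ 0 →
      ‖ω₁ k‖ = ‖cfs k‖ * ‖Complex.Gamma (I * ((k * ctil : ℝ) : ℂ))‖ := fun k hk => by
    rw [hω₁, if_neg hk, norm_neg, norm_mul]
  have hW := summable_weights hct hC hω₁0 hω₁n
  have hω₂n : ∀ k : ℤ, ‖ω₁ k‖ * Real.cosh (π * (k * ctil) / 2) = ‖ω₂ k‖ := fun k => by
    rcases eq_or_ne k 0 with rfl | hk
    · simp [hω₁0, hω₂0]
    · rw [hω₁n k hk, hω₂, if_neg hk, norm_mul, norm_mul, norm_cos_pi_div_two_mul_I]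
  obtain ⟨K, hK⟩ := exists_norm_Gamma_mul_cos_le hct
  have hω₂s : Summable fun k => ‖ω₂ k‖ := by
    refine Summable.of_nonneg_of_le (fun _ => norm_nonneg _) (fun k => ?_) (hcs.mul_right |K|)
    rcases eq_or_ne k 0 with rfl | hk
    · rw [hω₂0, norm_zero]; positivity
    · rw [hω₂, if_neg hk, norm_mul, norm_mul, mul_assoc]
      gcongr
      exact (hK _ (abs_int_mul_ge hct hk)).trans (le_abs_self K)
  -- Summability of the double series yields that of each binomial row with nonzero weight; this
  -- includes the boundary behaviour needed for Abel's theorem.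
  have hgs : ∀ k : ℤ, ω₁ k ≠ 0 →
      Summable fun j : ℕ => ‖gbinom (1 - I * ((k * ctil : ℝ) : ℂ)) j‖ := fun k hk =>
    (summable_mul_left_iff (norm_ne_zero_iff.mpr hk)).mp (hW.prod_factor k)
  obtain ⟨M, hM⟩ := hfb
  -- The coefficient of `f (x - j h)` in the double series, for `p = (k, j)`.
  set A : ℝ → ℤ × ℕ → ℂ := fun h p =>
    ω₁ p.1 * (h : ℂ) ^ (I * ((p.1 * ctil : ℝ) : ℂ) - 1) *
      (gbinom (1 - I * ((p.1 * ctil : ℝ) : ℂ)) p.2 * (-1) ^ p.2) with hA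
  have hAs : ∀ h > 0, Summable fun p => ‖A h p‖ := fun h hh => by
    refine (hW.mul_right (h⁻¹)).congr fun p => ?_
    rw [hA]
    simp only [norm_mul, norm_pow, norm_neg, norm_one, one_pow, mul_one,
      norm_cpow_eq_rpow_re_of_pos hh]
    have : (I * ((p.1 * ctil : ℝ) : ℂ) - 1).re = -1 := by simp
    rw [this, Real.rpow_neg_one]
    ring
  have hAfs : ∀ h > 0, ∀ y : ℝ, Summable fun p => ‖A h p * ((f (y - p.2 * h) : ℝ) : ℂ)‖ :=
    fun h hh y => by
      refine Summable.of_nonneg_of_le (fun _ => norm_nonneg _) (fun p => ?_)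
        ((hAs h hh).mul_right M)
      rw [norm_mul, Complex.norm_real, Real.norm_eq_abs]
      exact mul_le_mul_of_nonneg_left (hM _) (norm_nonneg _)
  have hΔ : ∀ h > 0, ∀ y : ℝ, Δ₁ h y =
      (∑' p, A h p * ((f (y - p.2 * h) : ℝ) : ℂ)) + (∑' k, ω₂ k) * ((f' y : ℝ) : ℂ) :=
    fun h hh y => by
      have h1 := (hAfs h hh y).of_norm
      have h2 : ∀ k : ℤ, ∑' j : ℕ, A h (k, j) * ((f (y - j * h) : ℝ) : ℂ) =
          ω₁ k * (h : ℂ) ^ (I * ((k * ctil : ℝ) : ℂ) - 1) *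
            (∑' j : ℕ, gbinom (1 - I * ((k * ctil : ℝ) : ℂ)) j * (-1 : ℂ) ^ j *
              ((f (y - j * h) : ℝ) : ℂ)) := fun k => by
        rw [← tsum_mul_left]
        congr 1; ext j; rw [hA]; ring
      have h3 := h1.prod
      simp only [h2] at h3
      rw [hΔ₁ h hh, h3.tsum_add (hω₂s.of_norm.mul_right _), tsum_mul_right, h1.tsum_prod]
      simp only [h2]
  refine ⟨fun h hh x => ⟨?_, ?_, ?_⟩, fun x => ?_⟩
  · refine (hAfs h hh x).congr fun p => ?_
    rw [hA]
    congr 1; ring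
  · simp only [norm_mul]
    exact hω₂s.mul_right _
  · rw [← Complex.conj_eq_iff_im, hΔ₁ h hh, Complex.conj_tsum, ← (Equiv.neg ℤ).tsum_eq]
    -- The terms of index `k` and `-k` are complex conjugates of each other.
    congr 1
    ext k
    have hz : ∀ k : ℤ, starRingEnd ℂ (I * ((k * ctil : ℝ) : ℂ)) =
        I * (((-k : ℤ) * ctil : ℝ) : ℂ) := fun k => by simp
    have hc1 : ∀ k, starRingEnd ℂ (ω₁ k) = ω₁ (-k) := fun k => by
      rw [hω₁, hω₁]
      split_ifs with h1 h2 h2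
      · simp
      · exact absurd (neg_eq_zero.mpr h1) h2
      · exact absurd (neg_eq_zero.mp h2) h1
      · rw [map_neg, map_mul, ← Complex.Gamma_conj, hz, hconj]
    have hc2 : ∀ k, starRingEnd ℂ (ω₂ k) = ω₂ (-k) := fun k => by
      rw [hω₂, hω₂]
      split_ifs with h1 h2 h2
      · simp
      · exact absurd (neg_eq_zero.mpr h1) h2
      · exact absurd (neg_eq_zero.mp h2) h1
      · rw [map_mul, map_mul, ← Complex.Gamma_conj, ← Complex.cos_conj, hz, hconj,
          map_mul _ ((π : ℂ) / 2), hz, show (π : ℂ) / 2 = ((π / 2 : ℝ) : ℂ) by push_cast; rfl,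
          Complex.conj_ofReal]
    have hc3 : ∀ w : ℂ, starRingEnd ℂ ((h : ℂ) ^ w) = (h : ℂ) ^ starRingEnd ℂ w := fun w => by
      have := Complex.conj_cpow (h : ℂ) (starRingEnd ℂ w)
        (by rw [Complex.arg_ofReal_of_nonneg hh.le]; exact Real.pi_pos.ne)
      rw [Complex.conj_conj, Complex.conj_ofReal] at this
      exact this.symm
    simp only [Equiv.neg_apply, map_add, map_mul, hc1, hc2, hc3, Complex.conj_tsum, gbinom_conj,
      map_sub, map_one, map_pow, map_neg, Complex.conj_ofReal, neg_neg]
    have hz' : starRingEnd ℂ I * (((-k : ℤ) * ctil : ℝ) : ℂ) = I * ((k * ctil : ℝ) : ℂ) := by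
      simp
    simp only [hz']
  · set fhat := ∫ y : ℝ, Complex.exp (I * (x : ℂ) * (y : ℂ)) * ((f y : ℝ) : ℂ) with hfhat
    have hre : ∀ k : ℤ, 0 < (1 - I * ((k * ctil : ℝ) : ℂ)).re := fun k => by simp
    have hF : ∀ h > 0, ∫ y : ℝ, Complex.exp (I * (x : ℂ) * (y : ℂ)) * Δ₁ h y =
        (∑' k : ℤ, (ω₁ k * ((1 - Complex.exp (I * (x : ℂ) * (h : ℂ))) / (h : ℂ)) ^
          (1 - I * ((k * ctil : ℝ) : ℂ)) + ω₂ k * (-I * (x : ℂ)))) * fhat := fun h hh => by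
      set z := Complex.exp (I * (x : ℂ) * (h : ℂ)) with hz
      have hz1 : ‖z‖ = 1 := norm_exp_I_mul_mul x h
      set G : ℤ × ℕ → ℝ → ℂ := fun p y =>
        A h p * (Complex.exp (I * (x : ℂ) * (y : ℂ)) * ((f (y - p.2 * h) : ℝ) : ℂ)) with hG
      have hGi : ∀ p, Integrable (G p) := fun p =>
        (integrable_exp_mul (hfi.comp_sub_right (p.2 * h)) x).const_mul _
      have hGn : Summable fun p => ∫ y, ‖G p y‖ := by
        refine ((hAs h hh).mul_right (∫ y, |f y|)).congr fun p => ?_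
        simp only [hG, norm_mul, norm_exp_I_mul_mul, one_mul, Complex.norm_real, Real.norm_eq_abs]
        rw [integral_const_mul, integral_sub_right_eq_self (fun y => |f y|)]
      have hGint : ∀ p : ℤ × ℕ, ∫ y, G p y = A h p * z ^ p.2 * fhat := fun p => by
        rw [hG]
        simp only
        rw [integral_const_mul]
        have he : Complex.exp (I * (x : ℂ) * ((p.2 * h : ℝ) : ℂ)) = z ^ p.2 := by
          rw [hz, ← Complex.exp_nat_mul]
          congr 1
          push_cast; ring
        rw [integral_exp_mul_translate f x (p.2 * h), ← hfhat, he]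
        ring
      have hGc : Continuous fun y => ∑' p, G p y := by
        refine continuous_tsum (u := fun p => ‖A h p‖ * M) (fun p => ?_)
          ((hAs h hh).mul_right M) fun p y => ?_
        · have : Continuous f := continuous_iff_continuousAt.mpr fun y => (hder y).continuousAt
          simp only [hG]
          fun_prop
        · simp only [hG, norm_mul, norm_exp_I_mul_mul, one_mul, Complex.norm_real,
            Real.norm_eq_abs]
          exact mul_le_mul_of_nonneg_left (hM _) (norm_nonneg _)
      have hGsum : Integrable fun y => ∑' p, G p y :=
        integrable_tsum_of_summable_integral_norm hGc.aestronglyMeasurable hGi hGn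
      -- Row by row the transformed series is a binomial series on the unit circle.
      have hAz : Summable fun p : ℤ × ℕ => A h p * z ^ p.2 := by
        refine Summable.of_norm ((hAs h hh).congr fun p => ?_)
        rw [norm_mul (A h p), norm_pow, hz1, one_pow, mul_one]
      have hk : ∀ k : ℤ, ∑' j : ℕ, A h (k, j) * z ^ j =
          ω₁ k * ((1 - z) / (h : ℂ)) ^ (1 - I * ((k * ctil : ℝ) : ℂ)) := fun k => by
        rcases eq_or_ne (ω₁ k) 0 with h0 | h0
        · simp [hA, h0]
        have ha0 : 1 - I * ((k * ctil : ℝ) : ℂ) ≠ 0 := fun h0 => by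
          have := hre k
          rw [h0] at this
          simp at this
        rw [← cpow_mul_cpow_eq hh _ ha0, ← gbinom_tsum hz1.le (hre k) (hgs k h0),
          ← mul_assoc, ← tsum_mul_left, neg_sub]
        congr 1; ext j
        rw [hA]; ring
      have hAk := hAz.prod
      simp only [hk] at hAk
      calc ∫ y : ℝ, Complex.exp (I * (x : ℂ) * (y : ℂ)) * Δ₁ h y
          = ∫ y : ℝ, ((∑' p, G p y) +
              (∑' k, ω₂ k) * (Complex.exp (I * (x : ℂ) * (y : ℂ)) * ((f' y : ℝ) : ℂ))) := by
            congr 1; ext y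
            rw [hΔ h hh, mul_add, ← tsum_mul_left]
            congr 1
            · congr 1; ext p; simp only [hG]; ring
            · ring
        _ = (∑' p, A h p * z ^ p.2 * fhat) + (∑' k, ω₂ k) * (-I * (x : ℂ) * fhat) := by
            rw [integral_add hGsum ((integrable_exp_mul hf'i x).const_mul _), integral_const_mul,
              integral_exp_mul_deriv hder hfi hf'i, ← hfhat,
              ← integral_tsum_of_summable_integral_norm hGi hGn]
            simp only [hGint]
        _ = _ := by
            rw [tsum_mul_right, hAz.tsum_prod]
            simp only [hk]
            rw [hAk.tsum_add (hω₂s.of_norm.mul_right _), tsum_mul_right]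
            ring
    -- Dominated convergence: `‖ω₁ k‖ cosh (π k ctil / 2) = ‖ω₂ k‖` absorbs the exponential growth
    -- of the complex powers.
    have hlim : Tendsto (fun h : ℝ => ∑' k : ℤ, (ω₁ k *
        ((1 - Complex.exp (I * (x : ℂ) * (h : ℂ))) / (h : ℂ)) ^
          (1 - I * ((k * ctil : ℝ) : ℂ)) + ω₂ k * (-I * (x : ℂ)))) (nhdsWithin 0 (Set.Ioi 0))
        (nhds (∑' k : ℤ, (ω₁ k * (-I * (x : ℂ)) ^ (1 - I * ((k * ctil : ℝ) : ℂ)) +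
          ω₂ k * (-I * (x : ℂ))))) := by
      refine tendsto_tsum_of_dominated_convergence
        (bound := fun k => ‖ω₂ k‖ * (2 * (|x| + 1) + |x|)) (hω₂s.mul_right _) (fun k => ?_) ?_
      · exact ((tendsto_diffQuot_cpow x (hre k)).const_mul _).add_const _
      · have hev : ∀ᶠ h : ℝ in nhdsWithin 0 (Set.Ioi 0),
            ‖(1 - Complex.exp (I * (x : ℂ) * (h : ℂ))) / (h : ℂ)‖ < |x| + 1 := by
          refine (tendsto_diffQuot x).norm.eventually_lt_const ?_
          simp
        filter_upwards [hev, self_mem_nhdsWithin] with h h1 h2 k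
        refine (norm_add_le _ _).trans ?_
        rw [norm_mul, norm_mul, mul_add]
        have h3 := norm_cpow_one_sub_le (diffQuot_re_nonneg x h2) (k * ctil)
        gcongr ?_ + ?_
        · calc _ ≤ ‖ω₁ k‖ * ((|x| + 1) * (2 * Real.cosh (π * (k * ctil) / 2))) := by
                have := Real.cosh_pos (π * (k * ctil) / 2)
                gcongr
                exact h3.trans (by gcongr)
            _ = _ := by rw [← hω₂n k]; ring
        · simp
    have hsub : ∑' k : {k : ℤ // k ≠ 0},
        (ω₁ k * (-I * (x : ℂ)) ^ (1 - I * (((k : ℤ) * ctil : ℝ) : ℂ)) + ω₂ k * (-I * (x : ℂ))) =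
        ∑' k : ℤ, (ω₁ k * (-I * (x : ℂ)) ^ (1 - I * ((k * ctil : ℝ) : ℂ)) +
          ω₂ k * (-I * (x : ℂ))) := by
      refine tsum_subtype_eq_of_support_subset (f := fun k : ℤ =>
        ω₁ k * (-I * (x : ℂ)) ^ (1 - I * ((k * ctil : ℝ) : ℂ)) + ω₂ k * (-I * (x : ℂ)))
        (s := {k : ℤ | k ≠ 0}) ?_
      intro k hk h0
      subst h0
      simp [hω₁0, hω₂0] at hk
    rw [hsub]
    refine (hlim.mul_const fhat).congr' ?_
    filter_upwards [self_mem_nhdsWithin] with h hh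
    exact (hF h hh).symm
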